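/- Let $\phi: \mathbb{D} \to \mathbb{C}$ be a univalent holomorphic map on the unit disk, and let $D \subseteq \mathbb{D}$ be an open disk centered at $z$ with $\overline{D} \subseteq \mathbb{D}$. Then $\phi(D)$ contains the open disk centered at $\phi(z)$ of radius $\frac{1}{4} \, \mathrm{radius}(D) \, |\phi'(z)|$. -/

import Mathlib

open Metric

/-!
Let `g` be holomorphic on the unit disk with `z ↦ z⁻¹ + g z` injective off `0`. This map sends the
annulus `ρ < ‖z‖ < σ` into the region bounded by the image of the inner circle, and that image lies
close to the ellipse `z⁻¹ + g 0 + g' 0 * z`, `‖z‖ = ρ`. Comparing areas, where orthogonality of the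
powers of `z` bounds the area of the image of the annulus from below, gives `‖g' 0‖ ≤ 1`. For
univalent `f`, the inverse square root of `(f (z ^ 2) - f 0) / f' 0` is such a map, and the
estimate becomes Bieberbach's inequality `‖f'' 0‖ ≤ 4 * ‖f' 0‖`. If `f` omits `w`, then `(w - f)⁻¹`
is univalent too, and the inequality for both functions forces `‖w - f 0‖ ≥ ‖f' 0‖ / 4`.
-/

open Complex Filter MeasureTheory Set
open scoped Real Topology ComplexConjugate

section CircleAverage

variable {f : ℂ → ℂ} {c : ℂ} {r : ℝ}

theorem circleAverage_norm_sq (hr : 0 < r) (hf : DiffContOnCl ℂ f (ball c r)) :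
    Real.circleAverage (fun z ↦ ‖f z‖ ^ 2) c r =
      ‖f c‖ ^ 2 + Real.circleAverage (fun z ↦ ‖f z - f c‖ ^ 2) c r := by
  set H : ℂ → ℂ := fun z ↦ 2 * conj (f c) * (f z - f c) with hH
  have hfC : ContinuousOn f (sphere c r) :=
    hf.continuousOn_ball.mono sphere_subset_closedBall
  have hHd : DiffContOnCl ℂ H (ball c |r|) := by
    rw [abs_of_pos hr]
    exact (hf.sub_const (f c)).const_smul (2 * conj (f c))
  have hHC : ContinuousOn H (sphere c r) := by fun_prop
  have hre : Real.circleAverage (reCLM ∘ H) c r = 0 := by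
    rw [reCLM.circleAverage_comp_comm (hHC.circleIntegrable hr.le), hHd.circleAverage]
    simp [hH]
  have hexpand : (fun z ↦ ‖f z‖ ^ 2) = fun z ↦ ‖f c‖ ^ 2 + ‖f z - f c‖ ^ 2 + (reCLM ∘ H) z := by
    ext z
    have := normSq_add (f c) (f z - f c)
    simp only [hH, Function.comp_apply, reCLM_apply, ← normSq_eq_norm_sq]
    rw [add_sub_cancel] at this
    rw [this, ← conj_re (2 * conj (f c) * (f z - f c))]
    simp [mul_assoc]
  rw [hexpand, Real.circleAverage_fun_add, hre, add_zero, Real.circleAverage_fun_add,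
    Real.circleAverage_const]
  · exact circleIntegrable_const _ _ _
  all_goals exact ContinuousOn.circleIntegrable hr.le (by fun_prop)

theorem norm_sq_le_circleAverage (hr : 0 < r) (hf : DiffContOnCl ℂ f (ball c r)) :
    ‖f c‖ ^ 2 ≤ Real.circleAverage (fun z ↦ ‖f z‖ ^ 2) c r := by
  rw [circleAverage_norm_sq hr hf]
  exact le_add_of_nonneg_right (Real.circleAverage_nonneg_of_nonneg fun _ _ ↦ by positivity)

theorem norm_sq_div_add_norm_sq_le_circleAverage (hr : 0 < r) (hf : DiffContOnCl ℂ f (ball 0 r))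
    (a : ℂ) {n : ℕ} (hn : n ≠ 0) :
    ‖a‖ ^ 2 / (r ^ n) ^ 2 + ‖f 0‖ ^ 2 ≤
      Real.circleAverage (fun z ↦ ‖a / z ^ n + f z‖ ^ 2) 0 r := by
  have hF : DiffContOnCl ℂ (fun z ↦ a + z ^ n * f z) (ball 0 r) :=
    ((differentiable_pow n).diffContOnCl.smul hf).const_add a
  have hscale (g : ℂ → ℂ) : Real.circleAverage (fun z ↦ ‖z ^ n * g z‖ ^ 2) 0 r =
      (r ^ n) ^ 2 * Real.circleAverage (fun z ↦ ‖g z‖ ^ 2) 0 r := by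
    rw [← smul_eq_mul, ← Real.circleAverage_fun_smul]
    refine Real.circleAverage_congr_sphere fun z hz ↦ ?_
    rw [mem_sphere_zero_iff_norm, abs_of_pos hr] at hz
    simp [hz, mul_pow]
  have hpole : Real.circleAverage (fun z ↦ ‖a + z ^ n * f z‖ ^ 2) 0 r =
      Real.circleAverage (fun z ↦ ‖z ^ n * (a / z ^ n + f z)‖ ^ 2) 0 r := by
    refine Real.circleAverage_congr_sphere fun z hz ↦ ?_
    have hz0 : z ≠ 0 := ne_of_mem_sphere hz (abs_pos.2 hr.ne').ne'
    field_simp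
  have hrn : 0 < (r ^ n) ^ 2 := by positivity
  refine le_of_mul_le_mul_left ?_ hrn
  calc (r ^ n) ^ 2 * (‖a‖ ^ 2 / (r ^ n) ^ 2 + ‖f 0‖ ^ 2)
      = ‖a‖ ^ 2 + (r ^ n) ^ 2 * ‖f 0‖ ^ 2 := by field_simp
    _ ≤ ‖a‖ ^ 2 + (r ^ n) ^ 2 * Real.circleAverage (fun z ↦ ‖f z‖ ^ 2) 0 r := by
      gcongr
      exact norm_sq_le_circleAverage hr hf
    _ = Real.circleAverage (fun z ↦ ‖a + z ^ n * f z‖ ^ 2) 0 r := by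
      rw [circleAverage_norm_sq hr hF, ← hscale]
      simp [hn]
    _ = (r ^ n) ^ 2 * Real.circleAverage (fun z ↦ ‖a / z ^ n + f z‖ ^ 2) 0 r := by
      rw [hpole, hscale]

end CircleAverage

section Area

variable {ρ σ : ℝ}

theorem setIntegral_circleMap_eq_circleAverage {E : Type*} [NormedAddCommGroup E]
    [NormedSpace ℝ E] (G : ℂ → E) (c : ℂ) (x : ℝ) :
    ∫ θ in Ioo (-π) π, G (circleMap c x θ) = (2 * π) • Real.circleAverage G c x := by
  rw [← integral_Ioc_eq_integral_Ioo,
    ← intervalIntegral.integral_of_le (by linarith [Real.pi_pos]),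
    Real.circleAverage_eq_integral_add (-π),
    intervalIntegral.integral_comp_add_right (fun θ ↦ G (circleMap c x θ)),
    smul_inv_smul₀ (by positivity)]
  congr 1 <;> ring

theorem setIntegral_annulus_eq_integral_circleAverage {E : Type*} [NormedAddCommGroup E]
    [NormedSpace ℝ E] {G : ℂ → E} (hρ : 0 ≤ ρ) (hρσ : ρ ≤ σ)
    (hG : ContinuousOn G {z | ‖z‖ ∈ Icc ρ σ}) :
    ∫ z in {z : ℂ | ‖z‖ ∈ Ioo ρ σ}, G z =
      ∫ x in ρ..σ, (2 * π * x) • Real.circleAverage G 0 x := by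
  have hpolar (p : ℝ × ℝ) : Complex.polarCoord.symm p = circleMap 0 p.1 p.2 := by
    simp [circleMap, exp_mul_I]
  have hcont : ContinuousOn (fun p : ℝ × ℝ ↦ p.1 • G (circleMap 0 p.1 p.2))
      (Icc ρ σ ×ˢ Icc (-π) π) := by
    refine continuousOn_fst.smul (hG.comp (Continuous.continuousOn ?_) ?_)
    · fun_prop
    · rintro ⟨x, θ⟩ ⟨hx, -⟩
      simpa [abs_of_nonneg (hρ.trans hx.1)] using hx
  have hint : IntegrableOn (fun p : ℝ × ℝ ↦ p.1 • G (circleMap 0 p.1 p.2))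
      (Ioo ρ σ ×ˢ Ioo (-π) π) :=
    (hcont.integrableOn_compact (isCompact_Icc.prod isCompact_Icc)).mono_set
      (prod_mono Ioo_subset_Icc_self Ioo_subset_Icc_self)
  have hA : MeasurableSet {z : ℂ | ‖z‖ ∈ Ioo ρ σ} := measurableSet_Ioo.preimage measurable_norm
  calc ∫ z in {z : ℂ | ‖z‖ ∈ Ioo ρ σ}, G z
      = ∫ p in polarCoord.target, p.1 • ({z : ℂ | ‖z‖ ∈ Ioo ρ σ}.indicator G)
          (Complex.polarCoord.symm p) := by
        rw [Complex.integral_comp_polarCoord_symm, integral_indicator hA]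
    _ = ∫ p in polarCoord.target, (Ioo ρ σ ×ˢ Ioo (-π) π).indicator
          (fun p : ℝ × ℝ ↦ p.1 • G (circleMap 0 p.1 p.2)) p := by
        refine setIntegral_congr_fun polarCoord.open_target.measurableSet ?_
        rintro ⟨x, θ⟩ ⟨hx : 0 < x, hθ⟩
        by_cases hxI : x ∈ Ioo ρ σ <;> simp_all [indicator, abs_of_pos hx]
    _ = ∫ p in Ioo ρ σ ×ˢ Ioo (-π) π, p.1 • G (circleMap 0 p.1 p.2) := by
        rw [setIntegral_indicator (measurableSet_Ioo.prod measurableSet_Ioo), inter_eq_right.2]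
        exact prod_mono (fun x hx ↦ hρ.trans_lt hx.1) le_rfl
    _ = ∫ x in Ioo ρ σ, ∫ θ in Ioo (-π) π, x • G (circleMap 0 x θ) :=
        setIntegral_prod _ hint
    _ = ∫ x in ρ..σ, (2 * π * x) • Real.circleAverage G 0 x := by
        rw [intervalIntegral.integral_of_le hρσ, integral_Ioc_eq_integral_Ioo]
        simp only [integral_smul, setIntegral_circleMap_eq_circleAverage, smul_smul]
        simp only [mul_comm]

theorem volume_real_image_eq_integral_norm_deriv_sq {g g' : ℂ → ℂ} {s : Set ℂ}
    (hs : MeasurableSet s) (hg : ∀ z ∈ s, HasDerivAt g (g' z) z) (hinj : InjOn g s) :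
    volume.real (g '' s) = ∫ z in s, ‖g' z‖ ^ 2 := by
  have hdet (a : ℂ) : ((ContinuousLinearMap.toSpanSingleton ℂ a).restrictScalars ℝ).det =
      ‖a‖ ^ 2 := by
    simp [ContinuousLinearMap.det, LinearMap.det_restrictScalars, Algebra.norm_complex_apply,
      normSq_eq_norm_sq]
  have hchange := integral_image_eq_integral_abs_det_fderiv_smul volume hs
    (fun z hz ↦ ((hg z hz).hasFDerivAt.restrictScalars ℝ).hasFDerivWithinAt) hinj (fun _ ↦ (1 : ℝ))
  simpa [hdet] using hchange

theorem integral_inv_cube_add_mul (hρ : 0 < ρ) (hρσ : ρ ≤ σ) (a : ℝ) :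
    ∫ x in ρ..σ, 2 * π * ((x ^ 3)⁻¹ + a * x) =
      π * ((ρ ^ 2)⁻¹ - (σ ^ 2)⁻¹ + a * (σ ^ 2 - ρ ^ 2)) := by
  have hpos {x : ℝ} (hx : x ∈ uIcc ρ σ) : 0 < x := by
    rw [uIcc_of_le hρσ] at hx
    exact hρ.trans_le hx.1
  have hprim : ∀ x ∈ uIcc ρ σ, HasDerivAt (fun x ↦ π * (-(x ^ 2)⁻¹ + a * x ^ 2))
      (2 * π * ((x ^ 3)⁻¹ + a * x)) x := by
    intro x hx
    have hx0 := hpos hx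
    convert! (((hasDerivAt_pow 2 x).inv (by positivity)).neg.add
      ((hasDerivAt_pow 2 x).const_mul a)).const_mul π using 1
    field_simp
    ring
  have hne : ∀ x ∈ uIcc ρ σ, x ^ 3 ≠ 0 := fun x hx ↦ pow_ne_zero 3 (hpos hx).ne'
  rw [intervalIntegral.integral_eq_sub_of_hasDerivAt hprim
    (ContinuousOn.intervalIntegrable (by fun_prop (disch := assumption)))]
  ring

theorem integral_annulus_norm_sq_ge {k : ℂ → ℂ} (hk : DifferentiableOn ℂ k (ball 0 1)) (hρ : 0 < ρ)
    (hρσ : ρ ≤ σ) (hσ : σ < 1) :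
    π * ((ρ ^ 2)⁻¹ - (σ ^ 2)⁻¹ + ‖k 0‖ ^ 2 * (σ ^ 2 - ρ ^ 2)) ≤
      ∫ z in {z : ℂ | ‖z‖ ∈ Ioo ρ σ}, ‖-1 / z ^ 2 + k z‖ ^ 2 := by
  have hpos {x : ℝ} (hx : x ∈ Icc ρ σ) : 0 < x := hρ.trans_le hx.1
  have hG : ContinuousOn (fun z ↦ ‖-1 / z ^ 2 + k z‖ ^ 2) {z | ‖z‖ ∈ Icc ρ σ} := by
    have hne : ∀ z ∈ {z : ℂ | ‖z‖ ∈ Icc ρ σ}, z ^ 2 ≠ 0 := fun z hz ↦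
      pow_ne_zero 2 (norm_pos_iff.1 (hpos hz))
    have hkC : ContinuousOn k {z | ‖z‖ ∈ Icc ρ σ} := hk.continuousOn.mono fun z hz ↦ by
      simpa using hz.2.trans_lt hσ
    fun_prop (disch := assumption)
  have hlowC : ContinuousOn (fun x ↦ 2 * π * ((x ^ 3)⁻¹ + ‖k 0‖ ^ 2 * x)) (Icc ρ σ) := by
    have hne : ∀ x ∈ Icc ρ σ, x ^ 3 ≠ 0 := fun x hx ↦ pow_ne_zero 3 (hpos hx).ne'
    fun_prop (disch := assumption)
  have hcircle {x : ℝ} (hx : x ∈ Icc ρ σ) : 2 * π * ((x ^ 3)⁻¹ + ‖k 0‖ ^ 2 * x) ≤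
      (2 * π * x) • Real.circleAverage (fun z ↦ ‖-1 / z ^ 2 + k z‖ ^ 2) 0 x := by
    have hx0 := hpos hx
    have hkx : DiffContOnCl ℂ k (ball 0 x) :=
      (hk.mono (closedBall_subset_ball (hx.2.trans_lt hσ))).diffContOnCl_ball subset_rfl
    calc 2 * π * ((x ^ 3)⁻¹ + ‖k 0‖ ^ 2 * x)
        = (2 * π * x) • (‖(-1 : ℂ)‖ ^ 2 / (x ^ 2) ^ 2 + ‖k 0‖ ^ 2) := by
          simp only [norm_neg, norm_one, smul_eq_mul]
          field_simp
      _ ≤ _ := by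
          gcongr
          exact norm_sq_div_add_norm_sq_le_circleAverage hx0 hkx (-1) two_ne_zero
  calc π * ((ρ ^ 2)⁻¹ - (σ ^ 2)⁻¹ + ‖k 0‖ ^ 2 * (σ ^ 2 - ρ ^ 2))
      = ∫ x in ρ..σ, 2 * π * ((x ^ 3)⁻¹ + ‖k 0‖ ^ 2 * x) := by
        rw [integral_inv_cube_add_mul hρ hρσ]
    _ ≤ ∫ x in ρ..σ, (2 * π * x) • Real.circleAverage (fun z ↦ ‖-1 / z ^ 2 + k z‖ ^ 2) 0 x := by
        refine intervalIntegral.integral_mono_on hρσ (hlowC.intervalIntegrable_of_Icc hρσ)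
          (ContinuousOn.intervalIntegrable_of_Icc hρσ ?_) fun x hx ↦ hcircle hx
        refine (by fun_prop : ContinuousOn (fun x : ℝ ↦ 2 * π * x) _).smul
          (Real.ContinuousOn.circleAverage (by simpa using hG) fun x hx ↦ (hpos hx).le)
    _ = _ := (setIntegral_annulus_eq_integral_circleAverage hρ.le hρσ hG).symm

end Area

section MaximumPrinciple

theorem exists_mem_frontier_isMaxOn_re {f : ℂ → ℂ} {U : Set ℂ} (hb : Bornology.IsBounded U)
    (hne : U.Nonempty) (hf : DiffContOnCl ℂ f U) :
    ∃ z ∈ frontier U, IsMaxOn (re ∘ f) (closure U) z := by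
  obtain ⟨z, hz, hmax⟩ := exists_mem_frontier_isMaxOn_norm hb hne
    (differentiable_exp.comp_diffContOnCl hf)
  refine ⟨z, hz, fun w hw ↦ ?_⟩
  simpa [norm_exp] using hmax hw

-- The reciprocal is holomorphic across the pole and vanishes there, so the maximum principle
-- makes its real part nonnegative somewhere on the circle.
theorem exists_mem_sphere_re_div_add_nonneg {a : ℂ} (ha : a ≠ 0) {h : ℂ → ℂ} {ρ : ℝ} (hρ : 0 < ρ)
    (hh : DiffContOnCl ℂ h (ball 0 ρ))
    (hne : ∀ y ∈ closedBall (0 : ℂ) ρ, y ≠ 0 → a / y + h y ≠ 0) :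
    ∃ y ∈ sphere (0 : ℂ) ρ, 0 ≤ (a / y + h y).re := by
  have hfactor {y : ℂ} (hy : y ≠ 0) : a + y * h y = y * (a / y + h y) := by
    field_simp
  have hden {y : ℂ} (hy : y ∈ closedBall 0 ρ) : a + y * h y ≠ 0 := by
    rcases eq_or_ne y 0 with rfl | hy0
    · simpa using ha
    · rw [hfactor hy0]
      exact mul_ne_zero hy0 (hne y hy hy0)
  set Q : ℂ → ℂ := fun y ↦ y * (a + y * h y)⁻¹
  have hQ : DiffContOnCl ℂ Q (ball 0 ρ) :=
    differentiable_id.diffContOnCl.smul (((differentiable_id.diffContOnCl.smul hh).const_add a).inv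
      fun y hy ↦ hden (closure_ball_subset_closedBall hy))
  obtain ⟨y, hy, hmax⟩ := exists_mem_frontier_isMaxOn_re isBounded_ball (nonempty_ball.2 hρ) hQ
  rw [frontier_ball _ hρ.ne'] at hy
  have hy0 : y ≠ 0 := ne_of_mem_sphere hy hρ.ne'
  have hQy : Q y = (a / y + h y)⁻¹ := by
    simp only [Q, hfactor hy0, mul_inv, mul_inv_cancel_left₀ hy0]
  have hQ0 : 0 ≤ (Q y).re := by
    simpa [Q] using hmax (subset_closure (mem_ball_self hρ))
  refine ⟨y, hy, le_of_not_gt fun hneg ↦ hQ0.not_gt ?_⟩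
  rw [hQy, inv_re]
  exact div_neg_of_neg_of_pos hneg (normSq_pos.2 fun h0 ↦ by simp [h0] at hneg)

theorem mem_of_sphere_inv_add_mem_of_forall_ne {h : ℂ → ℂ} {K : Set ℂ} (hK : Convex ℝ K)
    (hKc : IsClosed K) {ρ : ℝ} (hρ : 0 < ρ) (hh : DiffContOnCl ℂ h (ball 0 ρ))
    (hsphere : ∀ y ∈ sphere (0 : ℂ) ρ, y⁻¹ + h y ∈ K) {w : ℂ}
    (hw : ∀ y ∈ closedBall (0 : ℂ) ρ, y ≠ 0 → y⁻¹ + h y ≠ w) : w ∈ K := by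
  by_contra hwK
  obtain ⟨f, u, hfK, hfw⟩ := RCLike.geometric_hahn_banach_closed_point (𝕜 := ℂ) hK hKc hwK
  set a : ℂ := f 1
  have hfa (v : ℂ) : f v = a * v := by
    simpa [mul_comm] using f.map_smul v (1 : ℂ)
  simp only [hfa, RCLike.re_eq_complex_re] at hfK hfw
  have hsplit (y : ℂ) : a / y + a * (h y - w) = a * (y⁻¹ + h y - w) := by ring
  have hneg {y : ℂ} (hy : y ∈ sphere 0 ρ) : (a * (y⁻¹ + h y - w)).re < 0 := by
    have := hfK _ (hsphere y hy)
    rw [mul_sub, sub_re]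
    linarith
  have ha : a ≠ 0 := by
    intro ha
    simpa [ha] using hneg (y := ρ) (by simp [hρ.le])
  obtain ⟨y, hy, hre⟩ := exists_mem_sphere_re_div_add_nonneg ha hρ
    ((hh.sub_const w).const_smul a) fun y hy hy0 ↦ by
      simp only [Pi.smul_apply, smul_eq_mul, hsplit]
      exact mul_ne_zero ha (sub_ne_zero.2 (hw y hy hy0))
  simp only [Pi.smul_apply, smul_eq_mul, hsplit] at hre
  exact (hneg hy).not_ge hre

end MaximumPrinciple

section ConjShear

/-- The real-linear map `w ↦ w - c * conj w`; for `‖c‖ < 1` it pulls disks back to the elliptical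
regions that enclose images of circles. -/
noncomputable def conjShear (c : ℂ) : ℂ →L[ℝ] ℂ :=
  ContinuousLinearMap.id ℝ ℂ - c • (conjCLE : ℂ →L[ℝ] ℂ)

theorem conjShear_apply (c w : ℂ) : conjShear c w = w - c * conj w := rfl

theorem det_conjShear (c : ℂ) : LinearMap.det (conjShear c : ℂ →ₗ[ℝ] ℂ) = 1 - ‖c‖ ^ 2 := by
  rw [← LinearMap.det_toMatrix basisOneI, Matrix.det_fin_two, ← normSq_eq_norm_sq, normSq_apply]
  simp [LinearMap.toMatrix_apply, conjShear_apply]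
  ring

theorem norm_conjShear_le (c w : ℂ) : ‖conjShear c w‖ ≤ (1 + ‖c‖) * ‖w‖ := by
  rw [conjShear_apply]
  refine (norm_sub_le _ _).trans_eq ?_
  rw [norm_mul, norm_conj]
  ring

-- On the circle `‖y‖ = ρ` the conjugate of `y⁻¹` is `y / ρ ^ 2`, so shearing cancels `b * y`.
theorem conjShear_inv_add_mul (b : ℂ) {y : ℂ} (hy : y ≠ 0) :
    conjShear (b * ‖y‖ ^ 2) (y⁻¹ + b * y) = (1 - ‖b‖ ^ 2 * ‖y‖ ^ 4 : ℝ) * y⁻¹ := by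
  have hconj : (conj y : ℂ) ≠ 0 := (map_ne_zero _).2 hy
  have hsq (x : ℂ) : (‖x‖ : ℂ) ^ 2 = x * conj x := (mul_conj' x).symm
  rw [conjShear_apply]
  push_cast
  rw [show (‖y‖ : ℂ) ^ 4 = (‖y‖ ^ 2) ^ 2 by ring]
  simp only [hsq, map_add, map_mul, map_inv₀]
  field_simp
  ring

theorem volume_conjShear_preimage_closedBall {c : ℂ} (hc : ‖c‖ < 1) (w : ℂ) {R : ℝ} (hR : 0 ≤ R) :
    volume (conjShear c ⁻¹' closedBall w R) = ENNReal.ofReal (π * (R ^ 2 / (1 - ‖c‖ ^ 2))) := by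
  have hpos : 0 < 1 - ‖c‖ ^ 2 := by nlinarith [norm_nonneg c]
  have hpi : (NNReal.pi : ENNReal) = ENNReal.ofReal π := by
    rw [← NNReal.coe_real_pi, ENNReal.ofReal_coe_nnreal]
  rw [Measure.addHaar_preimage_continuousLinearMap _ (by rw [det_conjShear]; exact hpos.ne'),
    det_conjShear, volume_closedBall, abs_of_pos (inv_pos.2 hpos), hpi, ← ENNReal.ofReal_pow hR,
    ← ENNReal.ofReal_mul (by positivity), ← ENNReal.ofReal_mul (by positivity)]
  congr 1
  ring

end ConjShear

section AreaTheorem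

variable {h : ℂ → ℂ} {ρ σ : ℝ}

theorem norm_conjShear_inv_add_sub_le {b : ℂ} {δ : ℝ} {y : ℂ} (hy : y ≠ 0)
    (hb : ‖b‖ * ‖y‖ ^ 2 ≤ 1) (hh : ‖h y - h 0 - b * y‖ ≤ δ * ‖y‖) :
    ‖conjShear (b * ‖y‖ ^ 2) (y⁻¹ + h y) - conjShear (b * ‖y‖ ^ 2) (h 0)‖ ≤
      (1 - (‖b‖ * ‖y‖ ^ 2) ^ 2) / ‖y‖ + (1 + ‖b‖ * ‖y‖ ^ 2) * (δ * ‖y‖) := by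
  have hdecomp : y⁻¹ + h y - h 0 = (y⁻¹ + b * y) + (h y - h 0 - b * y) := by ring
  have hq : 0 ≤ 1 - ‖b‖ ^ 2 * ‖y‖ ^ 4 := by
    nlinarith [mul_nonneg (norm_nonneg b) (sq_nonneg ‖y‖)]
  rw [← map_sub, hdecomp, map_add, conjShear_inv_add_mul b hy]
  refine norm_add_le_of_le (le_of_eq ?_) ?_
  · rw [norm_mul, norm_real, Real.norm_of_nonneg hq, norm_inv]
    ring
  · refine (norm_conjShear_le _ _).trans ?_
    simp only [norm_mul, norm_pow, norm_real, norm_norm]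
    gcongr

theorem image_annulus_subset_conjShear_preimage (hh : DifferentiableOn ℂ h (ball 0 1))
    (hinj : InjOn (fun z ↦ z⁻¹ + h z) (ball 0 1 \ {0})) (hρ : 0 < ρ) (hσ : σ < 1) {b : ℂ}
    (hb : ‖b‖ * ρ ^ 2 ≤ 1) {δ : ℝ}
    (happrox : ∀ y ∈ sphere (0 : ℂ) ρ, ‖h y - h 0 - b * y‖ ≤ δ * ‖y‖) :
    (fun z ↦ z⁻¹ + h z) '' {z | ‖z‖ ∈ Ioo ρ σ} ⊆
      conjShear (b * ρ ^ 2) ⁻¹' closedBall (conjShear (b * ρ ^ 2) (h 0))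
        ((1 - (‖b‖ * ρ ^ 2) ^ 2) / ρ + (1 + ‖b‖ * ρ ^ 2) * (δ * ρ)) := by
  rintro _ ⟨z, ⟨hρz, hzσ⟩, rfl⟩
  have hz : z ∈ ball (0 : ℂ) 1 \ {0} :=
    ⟨mem_ball_zero_iff.2 (hzσ.trans hσ), norm_pos_iff.1 (hρ.trans hρz)⟩
  have hsub : closedBall (0 : ℂ) ρ ⊆ ball 0 1 := closedBall_subset_ball (by linarith)
  refine mem_of_sphere_inv_add_mem_of_forall_ne
    ((convex_closedBall _ _).linear_preimage (conjShear (b * ρ ^ 2)).toLinearMap)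
    (isClosed_closedBall.preimage (conjShear (b * ρ ^ 2)).continuous) hρ
    ((hh.mono hsub).diffContOnCl_ball subset_rfl) (fun y hy ↦ ?_) fun y hy hy0 heq ↦ ?_
  · have hy0 : y ≠ 0 := ne_of_mem_sphere hy hρ.ne'
    have hyρ : ‖y‖ = ρ := mem_sphere_zero_iff_norm.1 hy
    have hle := norm_conjShear_inv_add_sub_le hy0 (by rwa [hyρ]) (happrox y hy)
    rw [hyρ] at hle
    exact mem_closedBall_iff_norm.2 hle
  · have hyz : y = z := hinj ⟨hsub hy, hy0⟩ hz heq
    rw [hyz, mem_closedBall_zero_iff] at hy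
    exact hρz.not_ge hy

theorem pi_mul_le_volume_real_image_annulus (hh : DifferentiableOn ℂ h (ball 0 1))
    (hinj : InjOn (fun z ↦ z⁻¹ + h z) (ball 0 1 \ {0})) (hρ : 0 < ρ) (hρσ : ρ ≤ σ) (hσ : σ < 1) :
    π * ((ρ ^ 2)⁻¹ - (σ ^ 2)⁻¹ + ‖deriv h 0‖ ^ 2 * (σ ^ 2 - ρ ^ 2)) ≤
      volume.real ((fun z ↦ z⁻¹ + h z) '' {z | ‖z‖ ∈ Ioo ρ σ}) := by
  have hsub : {z : ℂ | ‖z‖ ∈ Ioo ρ σ} ⊆ ball 0 1 \ {0} := fun z hz ↦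
    ⟨mem_ball_zero_iff.2 (hz.2.trans hσ), norm_pos_iff.1 (hρ.trans hz.1)⟩
  have hderiv : ∀ z ∈ {z : ℂ | ‖z‖ ∈ Ioo ρ σ},
      HasDerivAt (fun z ↦ z⁻¹ + h z) (-1 / z ^ 2 + deriv h z) z := by
    intro z hz
    obtain ⟨hz1, hz0⟩ := hsub hz
    convert! (hasDerivAt_inv hz0).add
      (hh.differentiableAt (isOpen_ball.mem_nhds hz1)).hasDerivAt using 2
    rw [neg_div, one_div]
  exact (integral_annulus_norm_sq_ge (hh.deriv isOpen_ball) hρ hρσ hσ).trans_eq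
    (volume_real_image_eq_integral_norm_deriv_sq (measurableSet_Ioo.preimage measurable_norm)
      hderiv (hinj.mono hsub)).symm

theorem norm_deriv_sq_mul_sub_inv_le (hh : DifferentiableOn ℂ h (ball 0 1))
    (hinj : InjOn (fun z ↦ z⁻¹ + h z) (ball 0 1 \ {0})) (hρ : 0 < ρ) (hρσ : ρ ≤ σ) (hσ : σ < 1)
    (hb : ‖deriv h 0‖ * ρ ^ 2 < 1) {δ : ℝ} (hδ : 0 ≤ δ)
    (happrox : ∀ y ∈ sphere (0 : ℂ) ρ, ‖h y - h 0 - deriv h 0 * y‖ ≤ δ * ‖y‖) :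
    ‖deriv h 0‖ ^ 2 * σ ^ 2 - (σ ^ 2)⁻¹ ≤ (1 + ‖deriv h 0‖ * ρ ^ 2) *
      (2 * δ + δ ^ 2 * ρ ^ 2 / (1 - ‖deriv h 0‖ * ρ ^ 2)) := by
  set q := ‖deriv h 0‖ * ρ ^ 2 with hq
  set R := (1 - q ^ 2) / ρ + (1 + q) * (δ * ρ) with hR
  have hq0 : 0 ≤ q := by positivity
  have hq1 : 0 < 1 - q := by linarith
  have hqsq : 0 < 1 - q ^ 2 := by nlinarith
  have hR0 : 0 ≤ R := by positivity
  have hc : ‖deriv h 0 * (ρ : ℂ) ^ 2‖ = q := by simp [hq]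
  have hvol : volume.real ((fun z ↦ z⁻¹ + h z) '' {z | ‖z‖ ∈ Ioo ρ σ}) ≤
      π * (R ^ 2 / (1 - q ^ 2)) := by
    refine ENNReal.toReal_le_of_le_ofReal (by positivity) ((measure_mono
      (image_annulus_subset_conjShear_preimage hh hinj hρ hσ hb.le happrox)).trans_eq ?_)
    rw [volume_conjShear_preimage_closedBall (by rwa [hc]) _ hR0, hc]
  have hellipse : R ^ 2 / (1 - q ^ 2) = (ρ ^ 2)⁻¹ - ‖deriv h 0‖ ^ 2 * ρ ^ 2 +
      (1 + q) * (2 * δ + δ ^ 2 * ρ ^ 2 / (1 - q)) := by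
    have hderiv : ‖deriv h 0‖ = q / ρ ^ 2 := by
      rw [hq]
      field_simp
    rw [hderiv, hR, show 1 - q ^ 2 = (1 - q) * (1 + q) by ring]
    field_simp
    ring
  have harea := le_of_mul_le_mul_left
    ((pi_mul_le_volume_real_image_annulus hh hinj hρ hρσ hσ).trans hvol) Real.pi_pos
  linarith

-- With the inner radius `ρ` tending to `0`, the linear approximation of `h` at `0` is all the
-- precision needed: an error `δ * ρ` on the inner circle contributes `O(δ)` to the area.
theorem norm_deriv_sq_mul_sub_inv_nonpos (hh : DifferentiableOn ℂ h (ball 0 1))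
    (hinj : InjOn (fun z ↦ z⁻¹ + h z) (ball 0 1 \ {0})) (hσ : σ ∈ Ioo 0 1) :
    ‖deriv h 0‖ ^ 2 * σ ^ 2 - (σ ^ 2)⁻¹ ≤ 0 := by
  suffices hδ : ∀ δ > 0, ‖deriv h 0‖ ^ 2 * σ ^ 2 - (σ ^ 2)⁻¹ ≤ 2 * δ from
    le_of_forall_pos_le_add fun δ hδ0 ↦ by linarith [hδ (δ / 2) (half_pos hδ0)]
  intro δ hδ
  have hlin : ∀ᶠ y in 𝓝 (0 : ℂ), ‖h y - h 0 - deriv h 0 * y‖ ≤ δ * ‖y‖ := by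
    have hd := (hh.differentiableAt (ball_mem_nhds 0 one_pos)).hasDerivAt.isLittleO.def hδ
    simpa [mul_comm] using hd
  obtain ⟨ε, hε, hball⟩ := Metric.eventually_nhds_iff_ball.1 hlin
  have hsmall : ∀ᶠ ρ : ℝ in 𝓝[>] 0, ‖deriv h 0‖ * ρ ^ 2 < 1 := by
    have : ContinuousAt (fun ρ : ℝ ↦ ‖deriv h 0‖ * ρ ^ 2) 0 := by fun_prop
    exact (this.eventually_lt_const (by simp)).filter_mono nhdsWithin_le_nhds
  have hlim : Tendsto (fun ρ : ℝ ↦ (1 + ‖deriv h 0‖ * ρ ^ 2) *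
      (2 * δ + δ ^ 2 * ρ ^ 2 / (1 - ‖deriv h 0‖ * ρ ^ 2))) (𝓝[>] 0) (𝓝 (2 * δ)) := by
    have : ContinuousAt (fun ρ : ℝ ↦ (1 + ‖deriv h 0‖ * ρ ^ 2) *
        (2 * δ + δ ^ 2 * ρ ^ 2 / (1 - ‖deriv h 0‖ * ρ ^ 2))) 0 := by
      fun_prop (disch := simp)
    simpa using this.tendsto.mono_left nhdsWithin_le_nhds
  refine ge_of_tendsto hlim ?_
  filter_upwards [hsmall, Ioo_mem_nhdsGT hε, Ioo_mem_nhdsGT hσ.1] with ρ hb hρε hρσ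
  exact norm_deriv_sq_mul_sub_inv_le hh hinj hρσ.1 hρσ.2.le hσ.2 hb hδ.le fun y hy ↦
    hball y (sphere_subset_ball hρε.2 hy)

theorem norm_deriv_le_one_of_injOn_inv_add (hh : DifferentiableOn ℂ h (ball 0 1))
    (hinj : InjOn (fun z ↦ z⁻¹ + h z) (ball 0 1 \ {0})) : ‖deriv h 0‖ ≤ 1 := by
  have hlim : Tendsto (fun σ : ℝ ↦ ‖deriv h 0‖ ^ 2 * σ ^ 2 - (σ ^ 2)⁻¹) (𝓝[<] 1)
      (𝓝 (‖deriv h 0‖ ^ 2 - 1)) := by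
    have : ContinuousAt (fun σ : ℝ ↦ ‖deriv h 0‖ ^ 2 * σ ^ 2 - (σ ^ 2)⁻¹) 1 := by
      fun_prop (disch := simp)
    simpa using this.tendsto.mono_left nhdsWithin_le_nhds
  have hsq : ‖deriv h 0‖ ^ 2 - 1 ≤ 0 := le_of_tendsto hlim <| by
    filter_upwards [Ioo_mem_nhdsLT one_pos] with σ hσ
    exact norm_deriv_sq_mul_sub_inv_nonpos hh hinj hσ
  exact (sq_le_one_iff₀ (norm_nonneg _)).1 (by linarith)

end AreaTheorem

section SecondCoefficient

theorem isSimplyConnected_of_convex {E : Type*} [AddCommGroup E] [Module ℝ E] [TopologicalSpace E]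
    [ContinuousAdd E] [ContinuousSMul ℝ E] {s : Set E} (hs : Convex ℝ s) (hne : s.Nonempty) :
    IsSimplyConnected s := by
  have := hs.contractibleSpace hne
  exact inferInstanceAs (SimplyConnectedSpace s)

-- A continuous branch of the root is locally the inverse function of `w ↦ w ^ n` applied to `g`.
theorem exists_differentiableOn_pow_eq {U : Set ℂ} (hUc : IsSimplyConnected U) (hUo : IsOpen U)
    {g : ℂ → ℂ} (hg : DifferentiableOn ℂ g U) (hU₀ : 0 ∉ g '' U) {n : ℕ} (hn : n ≠ 0) :
    ∃ f : ℂ → ℂ, DifferentiableOn ℂ f U ∧ ∀ z, f z ^ n = g z := by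
  obtain ⟨f, hfc, hf⟩ := exists_continuousOn_pow_eq hUc hUo hg.continuousOn hU₀ hn
  refine ⟨f, fun z hz ↦ DifferentiableAt.differentiableWithinAt ?_, hf⟩
  have hfz : f z ≠ 0 := fun h0 ↦ hU₀ ⟨z, hz, by rw [← hf, h0, zero_pow hn]⟩
  have hpow := hasStrictDerivAt_pow n (f z)
  have hpow' : (n : ℂ) * f z ^ (n - 1) ≠ 0 :=
    mul_ne_zero (Nat.cast_ne_zero.2 hn) (pow_ne_zero _ hfz)
  have hinv := (hpow.to_localInverse hpow').hasDerivAt.differentiableAt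
  have hbranch : f =ᶠ[𝓝 z] hpow.localInverse _ _ _ hpow' ∘ g := by
    filter_upwards [(hfc.continuousAt (hUo.mem_nhds hz)).eventually
      (hpow.hasStrictFDerivAt_equiv hpow').eventually_left_inverse] with w hw
    rw [Function.comp_apply, ← hf w]
    exact hw.symm
  rw [hf z] at hinv
  exact (hinv.comp z (hg.differentiableAt (hUo.mem_nhds hz))).congr_of_eventuallyEq hbranch

theorem dslope_ne_zero_of_injOn {𝕜 E : Type*} [NontriviallyNormedField 𝕜] [NormedAddCommGroup E]
    [NormedSpace 𝕜 E] {f : 𝕜 → E} {s : Set 𝕜} (hf : InjOn f s) {a b : 𝕜} (ha : a ∈ s) (hb : b ∈ s)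
    (h' : deriv f a ≠ 0) : dslope f a b ≠ 0 := by
  rcases eq_or_ne b a with rfl | hba
  · rwa [dslope_same]
  · intro h0
    have hsub := sub_smul_dslope f a b
    rw [h0, smul_zero, eq_comm, sub_eq_zero] at hsub
    exact hba (hf hb ha hsub)

theorem deriv_deriv_eq_two_smul_deriv_dslope {E : Type*} [NormedAddCommGroup E] [NormedSpace ℂ E]
    [CompleteSpace E] {f : ℂ → E} {s : Set ℂ} {c : ℂ} (hs : IsOpen s) (hc : c ∈ s)
    (hf : DifferentiableOn ℂ f s) : deriv (deriv f) c = (2 : ℂ) • deriv (dslope f c) c := by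
  have hk : DifferentiableOn ℂ (dslope f c) s := (differentiableOn_dslope (hs.mem_nhds hc)).2 hf
  have hkd {z : ℂ} (hz : z ∈ s) : HasDerivAt (dslope f c) (deriv (dslope f c) z) z :=
    (hk.differentiableAt (hs.mem_nhds hz)).hasDerivAt
  have hf' : deriv f =ᶠ[𝓝 c] fun z ↦ (z - c) • deriv (dslope f c) z + dslope f c z := by
    filter_upwards [hs.mem_nhds hc] with z hz
    have hfz : HasDerivAt (fun z ↦ (z - c) • dslope f c z + f c)
        ((z - c) • deriv (dslope f c) z + (1 : ℂ) • dslope f c z) z :=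
      (((hasDerivAt_id z).sub_const c).smul (hkd hz)).add_const (f c)
    simpa [sub_smul_dslope] using hfz.deriv
  have hk' : HasDerivAt (deriv (dslope f c)) (deriv (deriv (dslope f c)) c) c :=
    ((hk.deriv hs).differentiableAt (hs.mem_nhds hc)).hasDerivAt
  have hfc : HasDerivAt (fun z ↦ (z - c) • deriv (dslope f c) z + dslope f c z)
      ((c - c) • deriv (deriv (dslope f c)) c + (1 : ℂ) • deriv (dslope f c) c +
        deriv (dslope f c) c) c :=
    (((hasDerivAt_id c).sub_const c).smul hk').add (hkd hc)
  rw [hf'.deriv_eq, hfc.deriv, sub_self, zero_smul, zero_add, one_smul, two_smul]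

-- The square-root transform: `w ↦ w / m w ^ 2` has an odd square root after `w = z ^ 2`, whose
-- reciprocal `m (z ^ 2) / z` is again injective.
theorem norm_deriv_le_norm_of_injOn_div_sq {m : ℂ → ℂ} (hm : DifferentiableOn ℂ m (ball 0 1))
    (hm0 : ∀ z ∈ ball (0 : ℂ) 1, m z ≠ 0) (hinj : InjOn (fun z ↦ z / m z ^ 2) (ball 0 1)) :
    ‖deriv m 0‖ ≤ ‖m 0‖ := by
  have h00 : m 0 ≠ 0 := hm0 0 (mem_ball_self one_pos)
  have hsq : MapsTo (fun z : ℂ ↦ z ^ 2) (ball 0 1) (ball 0 1) := fun z hz ↦ by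
    rw [mem_ball_zero_iff] at hz ⊢
    rw [norm_pow]
    exact pow_lt_one₀ (norm_nonneg z) hz two_ne_zero
  set u : ℂ → ℂ := fun z ↦ dslope m 0 (z ^ 2) / m 0
  have hu : DifferentiableOn ℂ u (ball 0 1) :=
    (((differentiableOn_dslope (ball_mem_nhds (0 : ℂ) one_pos)).2 hm).comp (by fun_prop)
      hsq).div_const _
  have hu' : deriv (fun z ↦ z * u z) 0 = deriv m 0 / m 0 := by
    have hu0 := (hu.differentiableAt (ball_mem_nhds 0 one_pos)).hasDerivAt
    simpa [u] using ((hasDerivAt_id' (0 : ℂ)).fun_mul hu0).deriv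
  have hg {z : ℂ} (hz : z ≠ 0) : z⁻¹ + z * u z = m (z ^ 2) / (m 0 * z) := by
    have hmz : z ^ 2 * dslope m 0 (z ^ 2) = m (z ^ 2) - m 0 := by
      simpa using sub_smul_dslope m 0 (z ^ 2)
    simp only [u]
    field_simp
    linear_combination hmz
  have hg2 {z : ℂ} (hz : z ≠ 0) :
      z ^ 2 / m (z ^ 2) ^ 2 = (m 0 ^ 2 * (z⁻¹ + z * u z) ^ 2)⁻¹ := by
    rw [hg hz]
    field_simp
  have hle : ‖deriv (fun z ↦ z * u z) 0‖ ≤ 1 := by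
    refine norm_deriv_le_one_of_injOn_inv_add (differentiableOn_id.mul hu) ?_
    rintro x ⟨hx, hx0 : x ≠ 0⟩ y ⟨hy, hy0 : y ≠ 0⟩ (hxy : x⁻¹ + x * u x = y⁻¹ + y * u y)
    have hxy2 : x ^ 2 = y ^ 2 := hinj (hsq hx) (hsq hy) (by simp only [hg2 hx0, hg2 hy0, hxy])
    rw [hg hx0, hg hy0, hxy2, div_eq_mul_inv, div_eq_mul_inv] at hxy
    exact mul_left_cancel₀ h00 (inv_injective (mul_left_cancel₀ (hm0 _ (hsq hy)) hxy))
  rwa [hu', norm_div, div_le_one (norm_pos_iff.2 h00)] at hle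

theorem mul_deriv_eq_of_sq_eq_inv {𝕜 : Type*} [NontriviallyNormedField 𝕜] {m k : 𝕜 → 𝕜} {c : 𝕜}
    (hm : DifferentiableAt 𝕜 m c) (hk : DifferentiableAt 𝕜 k c)
    (hmk : ∀ᶠ z in 𝓝 c, m z ^ 2 = (k z)⁻¹) (hk0 : k c ≠ 0) :
    m c * deriv k c = -2 * deriv m c * k c := by
  have hderiv : 2 * m c * deriv m c = -deriv k c / k c ^ 2 := by
    simpa using (hm.hasDerivAt.fun_pow 2).unique
      ((hk.hasDerivAt.fun_inv hk0).congr_of_eventuallyEq hmk)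
  have hone : m c ^ 2 * k c = 1 := by
    rw [hmk.self_of_nhds, inv_mul_cancel₀ hk0]
  rw [eq_div_iff (pow_ne_zero 2 hk0)] at hderiv
  linear_combination m c * hderiv - 2 * deriv m c * k c * hone

theorem norm_deriv_deriv_le_four_mul_norm_deriv {f : ℂ → ℂ} (hf : DifferentiableOn ℂ f (ball 0 1))
    (hinj : InjOn f (ball 0 1)) (hf' : deriv f 0 ≠ 0) :
    ‖deriv (deriv f) 0‖ ≤ 4 * ‖deriv f 0‖ := by
  have h0 : (0 : ℂ) ∈ ball (0 : ℂ) 1 := mem_ball_self one_pos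
  set k := dslope f 0
  have hk : DifferentiableOn ℂ k (ball 0 1) :=
    (differentiableOn_dslope (ball_mem_nhds _ one_pos)).2 hf
  have hkne : ∀ z ∈ ball (0 : ℂ) 1, k z ≠ 0 := fun z hz ↦ dslope_ne_zero_of_injOn hinj h0 hz hf'
  obtain ⟨m, hm, hmk⟩ := exists_differentiableOn_pow_eq
    (isSimplyConnected_of_convex (convex_ball (0 : ℂ) 1) ⟨0, h0⟩) isOpen_ball (hk.inv hkne)
    (fun ⟨z, hz, hz0⟩ ↦ inv_ne_zero (hkne z hz) hz0) two_ne_zero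
  have hmne : ∀ z ∈ ball (0 : ℂ) 1, m z ≠ 0 := fun z hz hz0 ↦
    inv_ne_zero (hkne z hz) (by simpa [hz0] using (hmk z).symm)
  have hmdiv (z : ℂ) : z / m z ^ 2 = f z - f 0 := by
    rw [hmk]
    simpa using sub_smul_dslope f 0 z
  have hle : ‖deriv m 0‖ ≤ ‖m 0‖ := by
    refine norm_deriv_le_norm_of_injOn_div_sq hm hmne ?_
    simp only [hmdiv]
    exact fun x hx y hy hxy ↦ hinj hx hy (sub_left_injective hxy)
  have hm' : m 0 * deriv k 0 = -2 * deriv m 0 * k 0 :=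
    mul_deriv_eq_of_sq_eq_inv (hm.differentiableAt (ball_mem_nhds 0 one_pos))
      (hk.differentiableAt (ball_mem_nhds 0 one_pos)) (.of_forall hmk) (hkne 0 h0)
  have hnorm : ‖m 0‖ * ‖deriv k 0‖ ≤ ‖m 0‖ * (2 * ‖deriv f 0‖) := by
    calc ‖m 0‖ * ‖deriv k 0‖ = ‖deriv m 0‖ * (2 * ‖deriv f 0‖) := by
          rw [← norm_mul, hm', show k 0 = deriv f 0 from dslope_same f 0]
          simp only [norm_mul, norm_neg, norm_ofNat]
          ring
      _ ≤ ‖m 0‖ * (2 * ‖deriv f 0‖) := by gcongr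
  rw [deriv_deriv_eq_two_smul_deriv_dslope isOpen_ball h0 hf, norm_smul, norm_ofNat]
  have := le_of_mul_le_mul_left hnorm (norm_pos_iff.2 (hmne 0 h0))
  linarith

end SecondCoefficient

section OneQuarter

theorem deriv_const_sub_inv {f : ℂ → ℂ} {s : Set ℂ} (hs : IsOpen s) (hf : DifferentiableOn ℂ f s)
    {w : ℂ} (hw : w ∉ f '' s) :
    EqOn (deriv fun z ↦ (w - f z)⁻¹) (fun z ↦ deriv f z / (w - f z) ^ 2) s := by
  intro z hz
  have hwz : w - f z ≠ 0 := sub_ne_zero.2 fun h ↦ hw ⟨z, hz, h.symm⟩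
  have hfz := (hf.differentiableAt (hs.mem_nhds hz)).hasDerivAt
  simpa using ((hfz.const_sub w).fun_inv hwz).deriv

theorem deriv_deriv_const_sub_inv {f : ℂ → ℂ} {s : Set ℂ} (hs : IsOpen s)
    (hf : DifferentiableOn ℂ f s) {w : ℂ} (hw : w ∉ f '' s) {z : ℂ} (hz : z ∈ s) :
    deriv (deriv fun z ↦ (w - f z)⁻¹) z =
      (deriv (deriv f) z + 2 * deriv f z ^ 2 / (w - f z)) / (w - f z) ^ 2 := by
  have hwz : w - f z ≠ 0 := sub_ne_zero.2 fun h ↦ hw ⟨z, hz, h.symm⟩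
  have hfz := (hf.differentiableAt (hs.mem_nhds hz)).hasDerivAt
  have hf'z := ((hf.deriv hs).differentiableAt (hs.mem_nhds hz)).hasDerivAt
  rw [((deriv_const_sub_inv hs hf hw).eventuallyEq_of_mem (hs.mem_nhds hz)).deriv_eq,
    (hf'z.fun_div ((hfz.const_sub w).fun_pow 2) (pow_ne_zero 2 hwz)).deriv]
  field_simp
  ring

-- If `w` is omitted, then `(w - f)⁻¹` is univalent as well, and the values at `0` of `f'' / f'`
-- for the two functions differ by `2 * f' 0 / (w - f 0)`.
theorem ball_subset_image_ball_zero_one {f : ℂ → ℂ} (hf : DifferentiableOn ℂ f (ball 0 1))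
    (hinj : InjOn f (ball 0 1)) : ball (f 0) (‖deriv f 0‖ / 4) ⊆ f '' ball 0 1 := by
  intro w hw
  by_contra hwf
  have h0 : (0 : ℂ) ∈ ball (0 : ℂ) 1 := mem_ball_self one_pos
  have hne {z : ℂ} (hz : z ∈ ball 0 1) : w - f z ≠ 0 :=
    sub_ne_zero.2 fun h ↦ hwf ⟨z, hz, h.symm⟩
  rw [mem_ball_iff_norm] at hw
  have hf' : deriv f 0 ≠ 0 := norm_pos_iff.1 (by linarith [norm_nonneg (w - f 0)])
  set D := w - f 0
  have hD : D ≠ 0 := hne h0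
  have hF' : deriv (fun z ↦ (w - f z)⁻¹) 0 = deriv f 0 / D ^ 2 :=
    deriv_const_sub_inv isOpen_ball hf hwf h0
  have hF : ‖deriv (deriv f) 0 + 2 * deriv f 0 ^ 2 / D‖ ≤ 4 * ‖deriv f 0‖ := by
    have hle := norm_deriv_deriv_le_four_mul_norm_deriv (f := fun z ↦ (w - f z)⁻¹)
      ((hf.const_sub w).inv fun z hz ↦ hne hz)
      (fun x hx y hy hxy ↦ hinj hx hy (sub_right_injective (inv_injective hxy)))
      (by rw [hF']; exact div_ne_zero hf' (pow_ne_zero 2 hD))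
    rw [hF', deriv_deriv_const_sub_inv isOpen_ball hf hwf h0, norm_div, norm_div,
      ← mul_div_assoc] at hle
    exact (div_le_div_iff_of_pos_right (norm_pos_iff.2 (pow_ne_zero 2 hD))).1 hle
  have hquot : 2 * ‖deriv f 0‖ ^ 2 / ‖D‖ ≤ 8 * ‖deriv f 0‖ := by
    calc 2 * ‖deriv f 0‖ ^ 2 / ‖D‖
        = ‖(deriv (deriv f) 0 + 2 * deriv f 0 ^ 2 / D) - deriv (deriv f) 0‖ := by
          simp
      _ ≤ 4 * ‖deriv f 0‖ + 4 * ‖deriv f 0‖ :=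
          norm_sub_le_of_le hF (norm_deriv_deriv_le_four_mul_norm_deriv hf hinj hf')
      _ = 8 * ‖deriv f 0‖ := by ring
  rw [div_le_iff₀ (norm_pos_iff.2 hD)] at hquot
  nlinarith [norm_pos_iff.2 hf']

end OneQuarter

theorem stmt13_general {φ : ℂ → ℂ} {z : ℂ} {r : ℝ} (hdiff : DifferentiableOn ℂ φ (ball z r))
    (hinj : InjOn φ (ball z r)) : ball (φ z) (r / 4 * ‖deriv φ z‖) ⊆ φ '' ball z r := by
  rcases le_or_gt r 0 with hr | hr
  · rw [ball_eq_empty.2 (mul_nonpos_of_nonpos_of_nonneg (by linarith) (norm_nonneg _))]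
    exact empty_subset _
  have hmaps : MapsTo (fun u : ℂ ↦ z + r * u) (ball 0 1) (ball z r) := by
    intro u hu
    rw [mem_ball_zero_iff] at hu
    rw [mem_ball_iff_norm, add_sub_cancel_left, norm_mul, norm_real, Real.norm_of_nonneg hr.le]
    exact mul_lt_of_lt_one_right hr hu
  have hderiv : deriv (φ ∘ fun u : ℂ ↦ z + r * u) 0 = deriv φ z * r := by
    have hφ : HasDerivAt φ (deriv φ z) (z + r * 0) := by
      simpa using (hdiff.differentiableAt (ball_mem_nhds z hr)).hasDerivAt
    have haff : HasDerivAt (fun u : ℂ ↦ z + r * u) r 0 := by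
      simpa using ((hasDerivAt_id (0 : ℂ)).const_mul (r : ℂ)).const_add z
    exact (hφ.comp 0 haff).deriv
  have haff_inj : InjOn (fun u : ℂ ↦ z + r * u) (ball 0 1) := fun _ _ _ _ huv ↦
    mul_left_cancel₀ (ofReal_ne_zero.2 hr.ne') (add_left_cancel huv)
  calc ball (φ z) (r / 4 * ‖deriv φ z‖)
      = ball ((φ ∘ fun u : ℂ ↦ z + r * u) 0) (‖deriv (φ ∘ fun u : ℂ ↦ z + r * u) 0‖ / 4) := by
        rw [hderiv, norm_mul, norm_real, Real.norm_of_nonneg hr.le, Function.comp_apply, mul_zero,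
          add_zero, mul_comm, mul_div_assoc]
    _ ⊆ (φ ∘ fun u : ℂ ↦ z + r * u) '' ball 0 1 :=
        ball_subset_image_ball_zero_one (hdiff.comp (by fun_prop) hmaps)
          (hinj.comp haff_inj hmaps)
    _ ⊆ φ '' ball z r := by
        rw [image_comp]
        exact image_mono hmaps.image_subset

/-- Koebe one-quarter theorem for subdisks: if `φ` is univalent on the
unit disk and `D = ball z r` has closure contained in the unit disk, then `φ(D)`
contains the disk around `φ z` of radius `(r/4) * |φ'(z)|`. -/
theorem stmt13 (φ : ℂ → ℂ)
    (hdiff : DifferentiableOn ℂ φ (ball (0 : ℂ) 1))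
    (hinj : Set.InjOn φ (ball (0 : ℂ) 1))
    (z : ℂ) (r : ℝ) (hr : 0 < r)
    (hD : closedBall z r ⊆ ball (0 : ℂ) 1) :
    ball (φ z) (r / 4 * ‖deriv φ z‖) ⊆ φ '' ball z r := by
  have hsub : ball z r ⊆ ball 0 1 := ball_subset_closedBall.trans hD
  exact stmt13_general (hdiff.mono hsub) (hinj.mono hsub)
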